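/- The butterfly graph B (two triangles sharing a single common vertex, i.e. vertices {0,1,2,3,4} with edges {1,2},{3,4} and {0,i} for i=1,2,3,4) has growth rate γ(B) = 11/3. -/

import Mathlib

open MeasureTheory Filter Topology
open scoped ENNReal Classical

/-- The ballistic deposition height process on a graph `G`, started from `h0`,
driven by the sequence of chosen vertices `X`. -/
noncomputable def heightProcess {V : Type*} [Fintype V] (G : SimpleGraph V)
    (h0 : V → ℕ) (X : ℕ → V) : ℕ → V → ℕ
  | 0 => h0
  | n + 1 => fun x =>
      if x = X n then
        1 + Finset.univ.sup (fun y =>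
          if y = x ∨ G.Adj x y then heightProcess G h0 X n y else 0)
      else heightProcess G h0 X n x

/-- `X` is an i.i.d. sequence of uniformly distributed `V`-valued random variables on `(Ω, μ)`:
every finite cylinder event has the product-of-uniform probabilities. -/
def IsUniformIID {V : Type*} [Fintype V] {Ω : Type*} [MeasurableSpace Ω]
    (μ : Measure Ω) (X : ℕ → Ω → V) : Prop :=
  (∀ (n : ℕ) (v : V), MeasurableSet {ω | X n ω = v}) ∧
  (∀ (n : ℕ) (f : ℕ → V), μ {ω | ∀ k < n, X k ω = f k} = (Fintype.card V : ℝ≥0∞)⁻¹ ^ n)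

/-- `γ` is the growth rate of `G`: `γ > 0` and, for any i.i.d. uniform driving sequence,
almost surely `(#V/n) · max_x H_{x,n} → γ` and `(#V/n) · min_x H_{x,n} → γ`. -/
def IsGrowthRate {V : Type*} [Fintype V] (G : SimpleGraph V) (γ : ℝ) : Prop :=
  0 < γ ∧
  ∀ {Ω : Type} [MeasurableSpace Ω] (μ : Measure Ω) [IsProbabilityMeasure μ]
    (X : ℕ → Ω → V), IsUniformIID μ X →
    (∀ᵐ ω ∂μ, Tendsto (fun n : ℕ =>
        (Fintype.card V : ℝ) *
          (⨆ x : V, (heightProcess G (fun _ => 0) (fun k => X k ω) n x : ℝ)) / n)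
      atTop (𝓝 γ)) ∧
    (∀ᵐ ω ∂μ, Tendsto (fun n : ℕ =>
        (Fintype.card V : ℝ) *
          (⨅ x : V, (heightProcess G (fun _ => 0) (fun k => X k ω) n x : ℝ)) / n)
      atTop (𝓝 γ))


/-- The butterfly graph: two triangles sharing the single common vertex `0`, i.e. vertices
`{0,1,2,3,4}` with edges `{1,2}`, `{3,4}` and `{0,i}` for `i = 1,2,3,4`. -/
def butterfly : SimpleGraph (Fin 5) :=
  SimpleGraph.fromRel fun i j => i = 0 ∨ (i = 1 ∧ j = 2) ∨ (i = 3 ∧ j = 4)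


/-- One step of the process at a vertex with neighbourhood supremum unfolded. -/
theorem butterfly_nbr (g : Fin 5 → ℕ) :
    (Finset.univ.sup (fun y => if y = 0 ∨ butterfly.Adj 0 y then g y else 0) =
      max (g 0) (max (max (g 1) (g 2)) (max (g 3) (g 4)))) ∧
    (Finset.univ.sup (fun y => if y = 1 ∨ butterfly.Adj 1 y then g y else 0) =
      max (g 0) (max (g 1) (g 2))) ∧
    (Finset.univ.sup (fun y => if y = 2 ∨ butterfly.Adj 2 y then g y else 0) =
      max (g 0) (max (g 1) (g 2))) ∧
    (Finset.univ.sup (fun y => if y = 3 ∨ butterfly.Adj 3 y then g y else 0) =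
      max (g 0) (max (g 3) (g 4))) ∧
    (Finset.univ.sup (fun y => if y = 4 ∨ butterfly.Adj 4 y then g y else 0) =
      max (g 0) (max (g 3) (g 4))) := by
  have hu : (Finset.univ : Finset (Fin 5)) = {0, 1, 2, 3, 4} := by decide
  rw [hu]
  simp only [Finset.sup_insert, Finset.sup_singleton, butterfly, SimpleGraph.fromRel_adj]
  refine ⟨?_, ?_, ?_, ?_, ?_⟩ <;> simp

noncomputable abbrev hp (x : ℕ → Fin 5) : ℕ → Fin 5 → ℕ :=
  heightProcess butterfly (fun _ => 0) x

theorem hp_succ (x : ℕ → Fin 5) (n : ℕ) (v : Fin 5) :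
    hp x (n + 1) v = if v = x n then
        1 + Finset.univ.sup (fun y =>
          if y = v ∨ butterfly.Adj v y then hp x n y else 0)
      else hp x n v := by
  simp only [hp, heightProcess]
  congr
  funext y
  congr

noncomputable def pp (x : ℕ → Fin 5) (n : ℕ) : ℕ := max (hp x n 0) (max (hp x n 1) (hp x n 2))
noncomputable def qq (x : ℕ → Fin 5) (n : ℕ) : ℕ := max (hp x n 0) (max (hp x n 3) (hp x n 4))
noncomputable def mm (x : ℕ → Fin 5) (n : ℕ) : ℕ := max (pp x n) (qq x n)

theorem pq_step (x : ℕ → Fin 5) (n : ℕ) :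
    (x n = 0 → pp x (n+1) = mm x n + 1 ∧ qq x (n+1) = mm x n + 1 ∧ hp x (n+1) 0 = mm x n + 1) ∧
    ((x n = 1 ∨ x n = 2) → pp x (n+1) = pp x n + 1 ∧ qq x (n+1) = qq x n) ∧
    ((x n = 3 ∨ x n = 4) → pp x (n+1) = pp x n ∧ qq x (n+1) = qq x n + 1) := by
  obtain ⟨b0, b1, b2, b3, b4⟩ := butterfly_nbr (hp x n)
  have e0 := hp_succ x n 0
  have e1 := hp_succ x n 1
  have e2 := hp_succ x n 2
  have e3 := hp_succ x n 3
  have e4 := hp_succ x n 4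
  rw [b0] at e0
  rw [b1] at e1
  rw [b2] at e2
  rw [b3] at e3
  rw [b4] at e4
  simp only [mm, pp, qq]
  refine ⟨fun h => ?_, fun h => ?_, fun h => ?_⟩
  · simp [h] at e0 e1 e2 e3 e4
    rw [e0, e1, e2, e3, e4]
    omega
  · rcases h with h | h <;> simp [h] at e0 e1 e2 e3 e4 <;> rw [e0, e1, e2, e3, e4] <;> omega
  · rcases h with h | h <;> simp [h] at e0 e1 e2 e3 e4 <;> rw [e0, e1, e2, e3, e4] <;> omega

theorem le_mm (x : ℕ → Fin 5) (n : ℕ) (v : Fin 5) : hp x n v ≤ mm x n := by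
  simp only [mm, pp, qq]
  fin_cases v <;> simp

theorem exists_mm (x : ℕ → Fin 5) (n : ℕ) : ∃ v, hp x n v = mm x n := by
  by_contra hc
  push Not at hc
  have h0 := hc 0
  have h1 := hc 1
  have h2 := hc 2
  have h3 := hc 3
  have h4 := hc 4
  simp only [mm, pp, qq] at *
  omega

theorem hp_self_le (x : ℕ → Fin 5) (n : ℕ) (v : Fin 5) (h : x n = v) :
    hp x n 0 ≤ hp x (n + 1) v := by
  obtain ⟨b0, b1, b2, b3, b4⟩ := butterfly_nbr (hp x n)
  rw [hp_succ, if_pos h.symm]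
  fin_cases v <;> simp only [Fin.zero_eta, Fin.mk_one, Fin.reduceFinMk] <;>
    first | rw [b0] | rw [b1] | rw [b2] | rw [b3] | rw [b4]
  all_goals omega

theorem hp_mono (x : ℕ → Fin 5) (v : Fin 5) : Monotone (fun n => hp x n v) := by
  refine monotone_nat_of_le_succ fun n => ?_
  rw [hp_succ]
  split_ifs with h
  · have := Finset.le_sup (f := fun y => if y = v ∨ butterfly.Adj v y then hp x n y else 0)
      (Finset.mem_univ v)
    simp only [true_or, if_true] at this
    omega
  · exact le_rfl

theorem hp_dep (n : ℕ) (f g : ℕ → Fin 5) (h : ∀ k < n, f k = g k) : hp f n = hp g n := by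
  induction n with
  | zero => simp [hp, heightProcess]
  | succ n ih =>
    have := ih fun k hk => h k (by omega)
    funext v
    rw [hp_succ, hp_succ, this, h n (by omega)]

/-- two hits, first of the centre, then of `v`, bring `v` above the old maximum -/
theorem mm_le_hp (x : ℕ → Fin 5) (v : Fin 5) {a b n : ℕ} (hab : a < b) (hbn : b < n)
    (ha : x a = 0) (hb : x b = v) : mm x a ≤ hp x n v := by
  have h1 := ((pq_step x a).1 ha).2.2
  have h2 : hp x (a+1) 0 ≤ hp x b 0 := hp_mono x 0 hab
  have h3 := hp_self_le x b v hb
  have h4 : hp x (b+1) v ≤ hp x n v := hp_mono x v hbn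
  omega

noncomputable def phi (p q : ℕ) : ℝ := (max p q : ℕ) + 2/3 * (1/2 : ℝ) ^ ((p - q) + (q - p))

theorem phi_mart (p q : ℕ) :
    phi (max p q + 1) (max p q + 1) + 2 * phi (p+1) q + 2 * phi p (q+1) = 5 * phi p q + 11/3 := by
  unfold phi
  rcases lt_trichotomy p q with h | h | h
  · obtain ⟨k, rfl⟩ := Nat.exists_eq_add_of_lt h
    have a1 : max (p+1) (p+k+1) = p+k+1 := by omega
    have a2 : max p (p+k+1+1) = p+k+2 := by omega
    have a3 : max p (p+k+1) = p+k+1 := by omega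
    have a4 : (p+1-(p+k+1)) + (p+k+1-(p+1)) = k := by omega
    have a5 : (p-(p+k+1+1)) + (p+k+1+1-p) = k+2 := by omega
    have a6 : (p-(p+k+1)) + (p+k+1-p) = k+1 := by omega
    rw [a1, a2, a3, a4, a5, a6]
    simp
    ring
  · subst h
    simp
    ring
  · obtain ⟨k, rfl⟩ := Nat.exists_eq_add_of_lt h
    have a1 : max (q+k+1) (q+1) = q+k+1 := by omega
    have a2 : max (q+k+1+1) q = q+k+2 := by omega
    have a3 : max (q+k+1) q = q+k+1 := by omega
    have a4 : (q+k+1-(q+1)) + (q+1-(q+k+1)) = k := by omega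
    have a5 : (q+k+1+1-q)+(q-(q+k+1+1)) = k+2 := by omega
    have a6 : (q+k+1-q)+(q-(q+k+1)) = k+1 := by omega
    rw [a1, a2, a3, a4, a5, a6]
    simp
    ring

noncomputable def ww (n : ℕ) (x : ℕ → Fin 5) : ℝ := phi (pp x n) (qq x n) - 11/15 * n - 2/3

noncomputable def cc (v : Fin 5) (n : ℕ) (x : ℕ → Fin 5) : ℝ :=
  (∑ k ∈ Finset.range n, if x k = v then (1:ℝ) else 0) - n / 5

theorem pq_dep (n : ℕ) (f g : ℕ → Fin 5) (h : ∀ k < n, f k = g k) :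
    pp f n = pp g n ∧ qq f n = qq g n := by
  simp only [pp, qq, hp_dep n f g h, and_self]

theorem phi_bounds (p q : ℕ) : ((max p q : ℕ) : ℝ) ≤ phi p q ∧ phi p q ≤ (max p q : ℕ) + 2/3 := by
  unfold phi
  have h1 : (0:ℝ) ≤ (1/2 : ℝ) ^ ((p - q) + (q - p)) := by positivity
  have h2 : (1/2 : ℝ) ^ ((p - q) + (q - p)) ≤ 1 := pow_le_one₀ (by norm_num) (by norm_num)
  constructor <;> linarith

theorem fin5_cases (v : Fin 5) : v = 0 ∨ (v = 1 ∨ v = 2) ∨ (v = 3 ∨ v = 4) := by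
  revert v; decide

theorem ww_bdd (n : ℕ) (x : ℕ → Fin 5) : |ww (n+1) x - ww n x| ≤ 2 := by
  have hs := pq_step x n
  have b1 := phi_bounds (pp x n) (qq x n)
  have b2 := phi_bounds (pp x (n+1)) (qq x (n+1))
  have h1 : max (pp x n) (qq x n) ≤ max (pp x (n+1)) (qq x (n+1)) := by
    simp only [mm] at hs
    rcases fin5_cases (x n) with h | h | h
    · have := hs.1 h; omega
    · have := hs.2.1 h; omega
    · have := hs.2.2 h; omega
  have h2 : max (pp x (n+1)) (qq x (n+1)) ≤ max (pp x n) (qq x n) + 1 := by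
    simp only [mm] at hs
    rcases fin5_cases (x n) with h | h | h
    · have := hs.1 h; omega
    · have := hs.2.1 h; omega
    · have := hs.2.2 h; omega
  have h1' : ((max (pp x n) (qq x n) : ℕ) : ℝ) ≤ (max (pp x (n+1)) (qq x (n+1)) : ℕ) := by
    exact_mod_cast h1
  have h2' : ((max (pp x (n+1)) (qq x (n+1)) : ℕ) : ℝ) ≤ (max (pp x n) (qq x n) : ℕ) + 1 := by
    exact_mod_cast h2
  unfold ww
  push_cast only [Nat.cast_add, Nat.cast_one]
  rw [abs_le]
  constructor <;> linarith

theorem ww_mart (n : ℕ) (x : ℕ → Fin 5) :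
    ∑ v, (ww (n+1) (Function.update x n v) - ww n x) = 0 := by
  have key : ∀ v, pp (Function.update x n v) n = pp x n ∧ qq (Function.update x n v) n = qq x n :=
    fun v => pq_dep n _ _ fun k hk => Function.update_of_ne (by omega) _ _
  have k0 := (pq_step (Function.update x n 0) n).1 (by simp)
  have k1 := (pq_step (Function.update x n 1) n).2.1 (by simp)
  have k2 := (pq_step (Function.update x n 2) n).2.1 (by simp)
  have k3 := (pq_step (Function.update x n 3) n).2.2 (by simp)
  have k4 := (pq_step (Function.update x n 4) n).2.2 (by simp)
  simp only [mm, key] at k0 k1 k2 k3 k4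
  rw [Fin.sum_univ_five]
  unfold ww
  rw [k0.1, k0.2.1, k1.1, k1.2, k2.1, k2.2, k3.1, k3.2, k4.1, k4.2]
  have := phi_mart (pp x n) (qq x n)
  push_cast only [Nat.cast_add, Nat.cast_one]
  linarith

theorem ww_zero (x : ℕ → Fin 5) : ww 0 x = 0 := by
  simp [ww, phi, pp, qq, hp, heightProcess]

theorem ww_dep (n : ℕ) (f g : ℕ → Fin 5) (h : ∀ k < n, f k = g k) : ww n f = ww n g := by
  unfold ww
  rw [(pq_dep n f g h).1, (pq_dep n f g h).2]

theorem cc_zero (v : Fin 5) (x : ℕ → Fin 5) : cc v 0 x = 0 := by simp [cc]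

theorem cc_dep (v : Fin 5) (n : ℕ) (f g : ℕ → Fin 5) (h : ∀ k < n, f k = g k) :
    cc v n f = cc v n g := by
  unfold cc
  congr 1
  refine Finset.sum_congr rfl fun k hk => ?_
  rw [h k (Finset.mem_range.1 hk)]

theorem cc_succ (v : Fin 5) (n : ℕ) (x : ℕ → Fin 5) :
    cc v (n+1) x = cc v n x + (if x n = v then 1 else 0) - 1/5 := by
  unfold cc
  rw [Finset.sum_range_succ]
  push_cast
  ring

theorem cc_bdd (v : Fin 5) (n : ℕ) (x : ℕ → Fin 5) : |cc v (n+1) x - cc v n x| ≤ 2 := by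
  rw [cc_succ, abs_le]
  split_ifs <;> constructor <;> linarith

theorem cc_mart (v : Fin 5) (n : ℕ) (x : ℕ → Fin 5) :
    ∑ u, (cc v (n+1) (Function.update x n u) - cc v n x) = 0 := by
  have key : ∀ u, cc v n (Function.update x n u) = cc v n x :=
    fun u => cc_dep v n _ _ fun k hk => Function.update_of_ne (by omega) _ _
  simp only [cc_succ, key, Function.update_self]
  have : ∀ u : Fin 5, cc v n x + (if u = v then (1:ℝ) else 0) - 1/5 - cc v n x =
    (if u = v then (1:ℝ) else 0) - 1/5 := fun u => by ring
  simp only [this, Finset.sum_sub_distrib, Finset.sum_ite_eq', Finset.mem_univ, if_true]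
  simp

/-- Exponential bound for bounded-increment martingales of a uniform sequence. -/
theorem exp_bound {Ω : Type} [MeasurableSpace Ω] (μ : Measure Ω) [IsProbabilityMeasure μ]
    (X : ℕ → Ω → Fin 5) (hX : IsUniformIID μ X) (W : ℕ → (ℕ → Fin 5) → ℝ)
    (hdep : ∀ n f g, (∀ k < n, f k = g k) → W n f = W n g)
    (hb : ∀ n f, |W (n+1) f - W n f| ≤ 2)
    (hm : ∀ n f, ∑ v, (W (n+1) (Function.update f n v) - W n f) = 0)
    (l : ℝ) (hl0 : 0 ≤ l) (hl : l ≤ 1/2) (n : ℕ) (a : ℝ) (j : ℕ) :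
    ∀ k, k + j = n → ∀ f : ℕ → Fin 5,
      μ.real {ω | (∀ i < k, X i ω = f i) ∧ a ≤ W n (fun i => X i ω)} ≤
        (1/5)^k * (Real.exp (l * W k f) * Real.exp (4 * l^2 * j) * Real.exp (-(l * a))) := by
  induction j with
  | zero =>
    intro k hk f
    simp only [add_zero] at hk
    subst hk
    by_cases h : a ≤ W k f
    · have h1 : μ.real {ω | ∀ i < k, X i ω = f i} = (1/5)^k := by
        rw [measureReal_def, hX.2 k f]
        simp
      have h2 : μ.real {ω | (∀ i < k, X i ω = f i) ∧ a ≤ W k (fun i => X i ω)} ≤ (1/5)^k := by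
        rw [← h1]
        exact measureReal_mono (fun ω hω => hω.1)
      refine h2.trans (le_mul_of_one_le_right (by positivity) ?_)
      rw [← Real.exp_add, ← Real.exp_add]
      apply Real.one_le_exp
      have := mul_le_mul_of_nonneg_left h hl0
      simp
      linarith
    · have : {ω | (∀ i < k, X i ω = f i) ∧ a ≤ W k (fun i => X i ω)} = ∅ := by
        ext ω
        simp only [Set.mem_ofPred_eq, Set.mem_empty_iff_false, iff_false, not_and]
        intro h1 h2
        rw [hdep k _ f h1] at h2
        exact h h2
      rw [this]
      simp only [measureReal_empty]
      positivity
  | succ j ih =>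
    intro k hk f
    have hsub : {ω | (∀ i < k, X i ω = f i) ∧ a ≤ W n (fun i => X i ω)} ⊆
        ⋃ v : Fin 5, {ω | (∀ i < k+1, X i ω = Function.update f k v i) ∧
          a ≤ W n (fun i => X i ω)} := by
      intro ω hω
      simp only [Set.mem_iUnion, Set.mem_ofPred_eq]
      refine ⟨X k ω, fun i hi => ?_, hω.2⟩
      rcases Nat.lt_succ_iff_lt_or_eq.1 hi with h | h
      · rw [Function.update_of_ne (by omega)]
        exact hω.1 i h
      · subst h; simp
    refine (measureReal_mono hsub).trans ((measureReal_iUnion_fintype_le _).trans ?_)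
    refine (Finset.sum_le_sum fun v _ => ih (k+1) (by omega) (Function.update f k v)).trans ?_
    have hexp : ∀ v, Real.exp (l * W (k+1) (Function.update f k v)) ≤
        Real.exp (l * W k f) *
          (1 + l * (W (k+1) (Function.update f k v) - W k f) + 4 * l^2) := by
      intro v
      set d := W (k+1) (Function.update f k v) - W k f with hd
      have hdb : |d| ≤ 2 := by
        have := hb k (Function.update f k v)
        rwa [hdep k (Function.update f k v) f
          (fun i hi => Function.update_of_ne (by omega) _ _)] at this
      have e1 : l * W (k+1) (Function.update f k v) = l * W k f + l * d := by rw [hd]; ring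
      rw [e1, Real.exp_add]
      refine mul_le_mul_of_nonneg_left ?_ (Real.exp_pos _).le
      have hld : |l * d| ≤ 1 := by
        rw [abs_mul, abs_of_nonneg hl0]
        nlinarith [abs_nonneg d]
      have h3 := Real.abs_exp_sub_one_sub_id_le hld
      have h4 := (abs_le.1 h3).2
      have h5 : d^2 ≤ 4 := by
        rw [← sq_abs]; nlinarith [abs_nonneg d]
      have h6 : (l*d)^2 ≤ 4 * l^2 := by nlinarith [sq_nonneg l]
      linarith
    have hsum : ∑ v, Real.exp (l * W (k+1) (Function.update f k v)) ≤
        5 * (Real.exp (l * W k f) * Real.exp (4 * l^2)) := by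
      refine (Finset.sum_le_sum fun v _ => hexp v).trans ?_
      rw [← Finset.mul_sum, Finset.sum_add_distrib, Finset.sum_add_distrib, ← Finset.mul_sum,
        hm k f]
      simp only [Finset.sum_const, Finset.card_univ, Fintype.card_fin, nsmul_eq_mul]
      have := Real.add_one_le_exp (4 * l^2)
      have h7 := mul_le_mul_of_nonneg_left this (Real.exp_pos (l * W k f)).le
      push_cast
      linarith
    rw [← Finset.mul_sum, ← Finset.sum_mul, ← Finset.sum_mul]
    have e2 : Real.exp (4 * l^2 * ((j+1 : ℕ) : ℝ)) = Real.exp (4*l^2*j) * Real.exp (4*l^2) := by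
      rw [← Real.exp_add]; congr 1; push_cast; ring
    rw [e2, pow_succ]
    have hp : 0 ≤ (1/5 : ℝ)^k * (1/5) * (Real.exp (4*l^2*j) * Real.exp (-(l*a))) := by positivity
    have := mul_le_mul_of_nonneg_left hsum hp
    linarith

theorem ae_le {Ω : Type} [MeasurableSpace Ω] (μ : Measure Ω) [IsProbabilityMeasure μ]
    (X : ℕ → Ω → Fin 5) (hX : IsUniformIID μ X) (W : ℕ → (ℕ → Fin 5) → ℝ)
    (hdep : ∀ n f g, (∀ k < n, f k = g k) → W n f = W n g)
    (hz : ∀ f, W 0 f = 0)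
    (hb : ∀ n f, |W (n+1) f - W n f| ≤ 2)
    (hm : ∀ n f, ∑ v, (W (n+1) (Function.update f n v) - W n f) = 0)
    (e : ℝ) (he : 0 < e) (he1 : e ≤ 1) :
    ∀ᵐ ω ∂μ, ∀ᶠ n : ℕ in atTop, W n (fun i => X i ω) < e * n := by
  have hbound : ∀ n : ℕ, μ {ω | e * n ≤ W n (fun i => X i ω)} ≤
      ENNReal.ofReal (Real.exp (-(e^2/16)) ^ n) := by
    intro n
    have h := exp_bound μ X hX W hdep hb hm (e/8) (by linarith) (by linarith) n (e*n) n 0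
      (by omega) (fun _ => 0)
    simp only [false_imp_iff, implies_true, true_and, hz, not_lt_zero] at h
    rw [← ENNReal.ofReal_toReal (measure_ne_top μ _)]
    apply ENNReal.ofReal_le_ofReal
    refine h.trans (le_of_eq ?_)
    rw [← Real.exp_add, ← Real.exp_add, ← Real.exp_nat_mul, pow_zero, one_mul]
    congr 1
    ring
  have hr : Real.exp (-(e^2/16)) < 1 := by
    rw [Real.exp_lt_one_iff]; have := sq_pos_of_pos he; linarith
  have hs : Summable (fun n : ℕ => Real.exp (-(e^2/16)) ^ n) :=
    summable_geometric_of_lt_one (Real.exp_pos _).le hr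
  have hfin : ∑' n : ℕ, μ {ω | e * n ≤ W n (fun i => X i ω)} ≠ ⊤ := by
    refine ne_top_of_le_ne_top ?_ (ENNReal.tsum_le_tsum hbound)
    rw [← ENNReal.ofReal_tsum_of_nonneg (fun n => by positivity) hs]
    exact ENNReal.ofReal_ne_top
  filter_upwards [ae_eventually_notMem hfin] with ω hω
  filter_upwards [hω] with n hn
  simpa using hn

theorem ae_tendsto {Ω : Type} [MeasurableSpace Ω] (μ : Measure Ω) [IsProbabilityMeasure μ]
    (X : ℕ → Ω → Fin 5) (hX : IsUniformIID μ X) (W : ℕ → (ℕ → Fin 5) → ℝ)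
    (hdep : ∀ n f g, (∀ k < n, f k = g k) → W n f = W n g)
    (hz : ∀ f, W 0 f = 0)
    (hb : ∀ n f, |W (n+1) f - W n f| ≤ 2)
    (hm : ∀ n f, ∑ v, (W (n+1) (Function.update f n v) - W n f) = 0) :
    ∀ᵐ ω ∂μ, ∀ e : ℝ, 0 < e → ∀ᶠ n : ℕ in atTop, |W n (fun i => X i ω)| ≤ e * n := by
  have h1 : ∀ᵐ ω ∂μ, ∀ j : ℕ, ∀ᶠ n : ℕ in atTop, W n (fun i => X i ω) < (1/((j:ℝ)+1)) * n :=
    ae_all_iff.2 fun j => ae_le μ X hX W hdep hz hb hm _ (by positivity)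
      (by rw [div_le_one (by positivity)]; linarith [Nat.cast_nonneg (α := ℝ) j])
  have h2 : ∀ᵐ ω ∂μ, ∀ j : ℕ, ∀ᶠ n : ℕ in atTop,
      -W n (fun i => X i ω) < (1/((j:ℝ)+1)) * n :=
    ae_all_iff.2 fun j => ae_le μ X hX (fun n f => - W n f)
      (fun n f g h => by rw [hdep n f g h]) (fun f => by rw [hz]; simp)
      (fun n f => by
        have := hb n f
        rw [← abs_neg] at this
        convert this using 2
        ring)
      (fun n f => by
        have := hm n f
        have h3 : ∀ v, (-W (n+1) (Function.update f n v) - -W n f) =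
          -(W (n+1) (Function.update f n v) - W n f) := fun v => by ring
        simp only [h3, Finset.sum_neg_distrib, this, neg_zero]) _ (by positivity)
      (by rw [div_le_one (by positivity)]; linarith [Nat.cast_nonneg (α := ℝ) j])
  filter_upwards [h1, h2] with ω g1 g2 e he
  obtain ⟨j, hj⟩ := exists_nat_one_div_lt he
  filter_upwards [g1 j, g2 j] with n k1 k2
  have : (1/((j:ℝ)+1)) * n ≤ e * n := mul_le_mul_of_nonneg_right hj.le (Nat.cast_nonneg n)
  rw [abs_le]
  constructor <;> linarith

theorem hit_late (x : ℕ → Fin 5) (v : Fin 5)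
    (h : ∀ e : ℝ, 0 < e → ∀ᶠ n : ℕ in atTop, |cc v n x| ≤ e * n) (d : ℝ) (hd : 0 < d)
    (hd1 : d < 1) :
    ∀ᶠ n : ℕ in atTop, ∃ t : ℕ, (1 - d) * n ≤ t ∧ t < n ∧ x t = v := by
  obtain ⟨K, hK⟩ := eventually_atTop.1 (h (d/20) (by linarith))
  have hlarge : ∀ᶠ n : ℕ in atTop, max ((K:ℝ) / (1-d)) (4/d) ≤ n :=
    tendsto_natCast_atTop_atTop.eventually_ge_atTop _
  filter_upwards [hlarge] with n hn
  have hn1 : (K:ℝ) ≤ (1-d) * n := by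
    have := (le_max_left _ _).trans hn
    rw [div_le_iff₀ (by linarith)] at this
    linarith
  have hn2 : 4 ≤ d * n := by
    have := (le_max_right _ _).trans hn
    rw [div_le_iff₀ hd] at this
    linarith
  by_contra hc
  push Not at hc
  set m := ⌈(1-d)*n⌉₊ with hm
  have hm1 : (1-d)*n ≤ m := Nat.le_ceil _
  have hm2 : (m:ℝ) < (1-d)*n + 1 := Nat.ceil_lt_add_one (by
    have : (0:ℝ) ≤ n := Nat.cast_nonneg n
    exact mul_nonneg (by linarith) this)
  have hmn : m ≤ n := by
    have : (m:ℝ) < n := by linarith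
    exact_mod_cast this.le
  have hsum : ∑ k ∈ Finset.range n, (if x k = v then (1:ℝ) else 0) =
      ∑ k ∈ Finset.range m, (if x k = v then (1:ℝ) else 0) := by
    symm
    refine Finset.sum_subset (Finset.range_mono hmn) fun k hk hk' => ?_
    simp only [Finset.mem_range, not_lt] at hk hk'
    have hkm : (m:ℝ) ≤ k := by exact_mod_cast hk'
    rw [if_neg (hc k (by linarith) hk)]
  have hKm : K ≤ m := by
    have : (K:ℝ) ≤ m := by linarith
    exact_mod_cast this
  have c1 := abs_le.1 (hK n (hKm.trans hmn))
  have c2 := abs_le.1 (hK m hKm)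
  unfold cc at c1 c2
  rw [hsum] at c1
  have hmn' : (m:ℝ) ≤ n := by exact_mod_cast hmn
  have : d/20*m ≤ d/20*n := mul_le_mul_of_nonneg_left hmn' (by linarith)
  nlinarith [c1.1, c2.2]

theorem mm_asymp (x : ℕ → Fin 5)
    (h : ∀ e : ℝ, 0 < e → ∀ᶠ n : ℕ in atTop, |ww n x| ≤ e * n) (e : ℝ) (he : 0 < e) :
    ∀ᶠ n : ℕ in atTop, |(mm x n : ℝ) - 11/15 * n| ≤ e * n := by
  have hlarge : ∀ᶠ n : ℕ in atTop, 4/e ≤ (n:ℝ) :=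
    tendsto_natCast_atTop_atTop.eventually_ge_atTop _
  filter_upwards [h (e/2) (by linarith), hlarge] with n hn h2
  rw [div_le_iff₀ he] at h2
  have b := phi_bounds (pp x n) (qq x n)
  unfold ww at hn
  rw [abs_le] at hn ⊢
  unfold mm
  constructor <;> linarith

theorem min_asymp (x : ℕ → Fin 5)
    (h : ∀ e : ℝ, 0 < e → ∀ᶠ n : ℕ in atTop, |(mm x n : ℝ) - 11/15 * n| ≤ e * n)
    (hc : ∀ v, ∀ e : ℝ, 0 < e → ∀ᶠ n : ℕ in atTop, |cc v n x| ≤ e * n) (v : Fin 5)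
    (e : ℝ) (he : 0 < e) :
    ∀ᶠ n : ℕ in atTop, |(hp x n v : ℝ) - 11/15 * n| ≤ e * n := by
  obtain ⟨d, hd0, hd1, hde⟩ : ∃ d : ℝ, 0 < d ∧ d < 1/2 ∧ 4 * d ≤ e :=
    ⟨min (1/4) (e/4), by positivity, (min_le_left _ _).trans_lt (by norm_num),
      by linarith [min_le_right (1/4 : ℝ) (e/4)]⟩
  obtain ⟨K, hK⟩ := eventually_atTop.1
    ((hit_late x 0 (hc 0) d hd0 (by linarith)).and (h d hd0))
  obtain ⟨L, hL⟩ := eventually_atTop.1 (h d hd0)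
  have hlarge : ∀ᶠ n : ℕ in atTop, 4 * (K + L : ℝ) ≤ (n:ℝ) :=
    tendsto_natCast_atTop_atTop.eventually_ge_atTop _
  filter_upwards [hit_late x v (hc v) d hd0 (by linarith), h d hd0, hlarge] with n hn hM hl
  obtain ⟨b, hb1, hb2, hb3⟩ := hn
  have hn0 : (0:ℝ) ≤ n := Nat.cast_nonneg n
  have hb4 : (1/2:ℝ) * n ≤ b := by nlinarith
  have hK0 : (0:ℝ) ≤ K := Nat.cast_nonneg K
  have hL0 : (0:ℝ) ≤ L := Nat.cast_nonneg L
  have hKb : K ≤ b := by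
    have : (K:ℝ) ≤ b := by linarith
    exact_mod_cast this
  obtain ⟨⟨a, ha1, ha2, ha3⟩, -⟩ := hK b hKb
  have ha4 : (1/2:ℝ) * b ≤ a := by nlinarith [Nat.cast_nonneg (α := ℝ) b]
  have hLa : L ≤ a := by
    have : (L:ℝ) ≤ a := by linarith
    exact_mod_cast this
  have hMa := abs_le.1 (hL a hLa)
  have hle : (mm x a : ℝ) ≤ hp x n v := by exact_mod_cast mm_le_hp x v ha2 hb2 ha3 hb3
  have hle2 : (hp x n v : ℝ) ≤ mm x n := by exact_mod_cast le_mm x n v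
  have hbn : (b:ℝ) ≤ n := by exact_mod_cast hb2.le
  have hab : (a:ℝ) ≤ b := by exact_mod_cast ha2.le
  have hM2 := abs_le.1 hM
  have hdn : d * b ≤ d * n := mul_le_mul_of_nonneg_left hbn hd0.le
  have hda : d * a ≤ d * n := mul_le_mul_of_nonneg_left (hab.trans hbn) hd0.le
  have hen : 4 * d * n ≤ e * n := mul_le_mul_of_nonneg_right hde hn0
  have hdn0 : 0 ≤ d * n := by positivity
  rw [abs_le]
  constructor
  · linarith [hMa.1]
  · linarith [hM2.2]

theorem lim_of_asymp (u : ℕ → ℝ)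
    (h : ∀ e : ℝ, 0 < e → ∀ᶠ n : ℕ in atTop, |u n - 11/15 * n| ≤ e * n) :
    Tendsto (fun n : ℕ => (Fintype.card (Fin 5) : ℝ) * u n / n) atTop (𝓝 (11/3)) := by
  rw [Metric.tendsto_nhds]
  intro e he
  filter_upwards [h (e/10) (by linarith), eventually_gt_atTop 0] with n hn h0
  have h0' : (0:ℝ) < n := by exact_mod_cast h0
  rw [Real.dist_eq]
  have e1 : (Fintype.card (Fin 5) : ℝ) * u n / n - 11/3 = 5 * (u n - 11/15 * n) / n := by
    simp only [Fintype.card_fin]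
    push_cast
    field_simp
    ring
  rw [e1, abs_div, abs_mul, abs_of_pos h0', div_lt_iff₀ h0', abs_of_pos (by norm_num : (0:ℝ) < 5)]
  nlinarith

theorem stmt4 : IsGrowthRate butterfly (11 / 3) := by
  refine ⟨by norm_num, ?_⟩
  intro Ω _ μ _ X hX
  have hw := ae_tendsto μ X hX ww ww_dep ww_zero ww_bdd ww_mart
  have hcc : ∀ᵐ ω ∂μ, ∀ v, ∀ e : ℝ, 0 < e →
      ∀ᶠ n : ℕ in atTop, |cc v n (fun i => X i ω)| ≤ e * n :=
    ae_all_iff.2 fun v => ae_tendsto μ X hX (cc v) (cc_dep v) (cc_zero v) (cc_bdd v) (cc_mart v)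
  constructor
  · filter_upwards [hw] with ω hω
    refine lim_of_asymp _ fun e he => ?_
    filter_upwards [mm_asymp _ hω e he] with n hn
    have : (⨆ v : Fin 5, (hp (fun k => X k ω) n v : ℝ)) = mm (fun k => X k ω) n := by
      apply le_antisymm
      · exact ciSup_le fun v => by exact_mod_cast le_mm _ n v
      · obtain ⟨v, hv⟩ := exists_mm (fun k => X k ω) n
        rw [← hv]
        exact le_ciSup (f := fun v : Fin 5 => (hp (fun k => X k ω) n v : ℝ))
          (Set.finite_range _).bddAbove v
    rw [← this] at hn
    exact hn
  · filter_upwards [hw, hcc] with ω hω hc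
    refine lim_of_asymp _ fun e he => ?_
    have hall := eventually_all.2 fun v => min_asymp _ (mm_asymp _ hω) hc v e he
    filter_upwards [hall] with n hn
    obtain ⟨v, hv⟩ := exists_eq_ciInf_of_finite
      (f := fun v : Fin 5 => (hp (fun k => X k ω) n v : ℝ))
    have := hn v
    rw [hv] at this
    exact this
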